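/- For every integer N ≥ 1 there is a constant C > 0 (independent of N) such that for all t with 0 < |t| ≤ 1/N and all x ∈ 𝕋 = ℝ/ℤ, the exponential sum satisfies | ∑_{ξ = −N}^{N} e^{2πi (x ξ + t ξ²)} | ≤ C |t|^{−1/2}. -/

import Mathlib

/-!
The phase `f ξ = x ξ + t ξ²` has increments `Δ f` that grow by `2 t` at each step, so over `n`
consecutive integers they sweep out an interval of length about `2 t n`, which meets `O(1 + t n)`
unit intervals `[k, k + 1)`. In one unit interval, at most `O(t ^ (-1 / 2))` increments lie within
`√t / 2` of an integer, and these terms are bounded trivially. On the rest the summands oscillate: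
`𝐞 (f ξ) = (1 - 𝐞 (Δ f ξ))⁻¹ * (𝐞 (f ξ) - 𝐞 (f (ξ + 1)))`, and since
`(1 - 𝐞 y)⁻¹ = (1 + i cot (π y)) / 2` has size and total variation `O(t ^ (-1 / 2))` there,
summation by parts bounds their sum by `O(t ^ (-1 / 2))` as well.
-/

open Complex Finset
open scoped Real

section

open scoped FourierTransform fwdDiff

theorem two_mul_le_sin_pi_mul {θ x : ℝ} (hθ : 0 ≤ θ) (hx : x ∈ Set.Icc θ (1 - θ)) :
    2 * θ ≤ Real.sin (π * x) := by
  have jordan {y : ℝ} (hy0 : 0 ≤ y) (hy : y ≤ 1 / 2) : 2 * y ≤ Real.sin (π * y) := by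
    have h := Real.mul_le_sin (x := π * y) (by positivity) (by nlinarith [Real.pi_pos])
    rwa [← mul_assoc, div_mul_cancel₀ _ Real.pi_ne_zero] at h
  rcases le_total x (1 / 2) with hx2 | hx2
  · linarith [hx.1, jordan (hθ.trans hx.1) hx2]
  · have h := jordan (y := 1 - x) (by linarith [hx.2]) (by linarith)
    have hreflect : Real.sin (π * (1 - x)) = Real.sin (π * x) := by
      rw [mul_sub, mul_one, Real.sin_pi_sub]
    linarith [hx.2]

theorem abs_cot_pi_mul_le {θ x : ℝ} (hθ : 0 < θ) (hx : x ∈ Set.Icc θ (1 - θ)) :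
    |Real.cot (π * x)| ≤ 1 / (2 * θ) := by
  have hsin := two_mul_le_sin_pi_mul hθ.le hx
  rw [Real.cot_eq_cos_div_sin, abs_div]
  exact div_le_div₀ zero_le_one (Real.abs_cos_le_one _) (by linarith)
    (hsin.trans (le_abs_self _))

theorem antitoneOn_cot : AntitoneOn Real.cot (Set.Ioo 0 π) := by
  intro x hx y hy hxy
  have hsin : 0 ≤ Real.sin (y - x) :=
    Real.sin_nonneg_of_nonneg_of_le_pi (by linarith) (by linarith [hx.1, hy.2])
  rw [Real.sin_sub] at hsin
  rw [Real.cot_eq_cos_div_sin, Real.cot_eq_cos_div_sin,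
    div_le_div_iff₀ (Real.sin_pos_of_mem_Ioo hy) (Real.sin_pos_of_mem_Ioo hx)]
  linarith

theorem one_sub_fourierChar_mul_eq_one {x : ℝ} (hx : Real.sin (π * x) ≠ 0) :
    (1 - (𝐞 x : ℂ)) * ((1 + I * Real.cot (π * x)) / 2) = 1 := by
  have hsin : Complex.sin (π * x) ≠ 0 := by exact_mod_cast hx
  have hpyth := Complex.sin_sq_add_cos_sq (π * x : ℂ)
  have hexp : (𝐞 x : ℂ) = (Complex.cos (π * x) + Complex.sin (π * x) * I) ^ 2 := by
    rw [← Complex.exp_mul_I, ← Complex.exp_nat_mul, Real.fourierChar_apply]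
    push_cast
    ring_nf
  have hfactor : 1 - (𝐞 x : ℂ) =
      2 * Complex.sin (π * x) * (Complex.sin (π * x) - Complex.cos (π * x) * I) := by
    rw [hexp]
    linear_combination -hpyth - Complex.sin (π * x) ^ 2 * I_sq
  rw [hfactor, Real.cot_eq_cos_div_sin]
  push_cast
  field_simp
  linear_combination hpyth - Complex.cos (π * x) ^ 2 * I_sq

theorem inv_one_sub_fourierChar {x : ℝ} (hx : Real.sin (π * x) ≠ 0) :
    (1 - (𝐞 x : ℂ))⁻¹ = (1 + I * Real.cot (π * x)) / 2 :=
  inv_eq_of_mul_eq_one_right (one_sub_fourierChar_mul_eq_one hx)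

theorem fourierChar_eq_inv_one_sub_mul_sub {x y : ℝ} (hxy : Real.sin (π * (y - x)) ≠ 0) :
    (𝐞 x : ℂ) = (1 - (𝐞 (y - x) : ℂ))⁻¹ * (𝐞 x - 𝐞 y) := by
  have hne : 1 - (𝐞 (y - x) : ℂ) ≠ 0 :=
    left_ne_zero_of_mul_eq_one (one_sub_fourierChar_mul_eq_one hxy)
  have hmul : (𝐞 y : ℂ) = 𝐞 x * 𝐞 (y - x) := by
    rw [← Circle.coe_mul, ← AddChar.map_add_eq_mul, add_sub_cancel]
  rw [eq_inv_mul_iff_mul_eq₀ hne, hmul]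
  ring

theorem norm_inv_one_sub_fourierChar_le {θ x : ℝ} (hθ : 0 < θ) (hx : x ∈ Set.Icc θ (1 - θ)) :
    ‖(1 - (𝐞 x : ℂ))⁻¹‖ ≤ 1 / (2 * θ) := by
  have hsin := two_mul_le_sin_pi_mul hθ.le hx
  have hone : 1 ≤ 1 / (2 * θ) := by
    rw [le_div_iff₀ (by positivity)]
    linarith [hx.1, hx.2]
  rw [inv_one_sub_fourierChar (by linarith)]
  calc ‖(1 + I * Real.cot (π * x)) / 2‖ ≤ (1 + |Real.cot (π * x)|) / 2 := by
        rw [norm_div, Complex.norm_ofNat]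
        gcongr
        simpa only [norm_one, norm_mul, norm_I, one_mul, norm_real, Real.norm_eq_abs] using
          norm_add_le (1 : ℂ) (I * Real.cot (π * x))
    _ ≤ 1 / (2 * θ) := by linarith [abs_cot_pi_mul_le hθ hx]

theorem norm_inv_one_sub_fourierChar_sub {x y : ℝ} (hx : 0 < x) (hxy : x ≤ y) (hy : y < 1) :
    ‖(1 - (𝐞 y : ℂ))⁻¹ - (1 - (𝐞 x : ℂ))⁻¹‖ =
      (Real.cot (π * x) - Real.cot (π * y)) / 2 := by
  have hmem {z : ℝ} (hz0 : 0 < z) (hz1 : z < 1) : π * z ∈ Set.Ioo 0 π :=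
    ⟨by positivity, mul_lt_of_lt_one_right Real.pi_pos hz1⟩
  have hπx := hmem hx (hxy.trans_lt hy)
  have hπy := hmem (hx.trans_le hxy) hy
  have hcot : Real.cot (π * y) ≤ Real.cot (π * x) := antitoneOn_cot hπx hπy (by gcongr)
  have hsub : (1 - (𝐞 y : ℂ))⁻¹ - (1 - (𝐞 x : ℂ))⁻¹ =
      I * ((Real.cot (π * y) - Real.cot (π * x)) / 2 : ℝ) := by
    rw [inv_one_sub_fourierChar (Real.sin_pos_of_mem_Ioo hπx).ne',
      inv_one_sub_fourierChar (Real.sin_pos_of_mem_Ioo hπy).ne']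
    push_cast
    ring
  rw [hsub, norm_mul, norm_I, norm_real, Real.norm_of_nonpos (by linarith)]
  ring

theorem sum_Ico_norm_inv_one_sub_fourierChar_sub_le {d : ℕ → ℝ} (hd : Monotone d) {θ : ℝ}
    (hθ : 0 < θ) {a b : ℕ} (hab : a ≤ b) (hdθ : ∀ n ∈ Icc a b, d n ∈ Set.Icc θ (1 - θ)) :
    ∑ n ∈ Ico a b, ‖(1 - (𝐞 (d (n + 1)) : ℂ))⁻¹ - (1 - (𝐞 (d n) : ℂ))⁻¹‖ ≤ 1 / (2 * θ) := by
  have hterm (n : ℕ) (hn : n ∈ Ico a b) :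
      ‖(1 - (𝐞 (d (n + 1)) : ℂ))⁻¹ - (1 - (𝐞 (d n) : ℂ))⁻¹‖ =
        -Real.cot (π * d (n + 1)) / 2 - -Real.cot (π * d n) / 2 := by
    rw [mem_Ico] at hn
    have h₀ := (hdθ n (mem_Icc.2 (by lia))).1
    have h₁ := (hdθ (n + 1) (mem_Icc.2 (by lia))).2
    rw [norm_inv_one_sub_fourierChar_sub (by linarith) (hd n.le_succ) (by linarith)]
    ring
  rw [sum_congr rfl hterm, sum_Ico_sub (fun n ↦ -Real.cot (π * d n) / 2) hab]
  have ha := abs_le.1 (abs_cot_pi_mul_le hθ (hdθ a (left_mem_Icc.2 hab)))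
  have hb := abs_le.1 (abs_cot_pi_mul_le hθ (hdθ b (right_mem_Icc.2 hab)))
  linarith [ha.2, hb.1]

theorem norm_sum_Ico_mul_sub_succ_le {R : Type*} [SeminormedRing R] (c u : ℕ → R)
    (hu : ∀ n, ‖u n‖ ≤ 1) {a b : ℕ} (hab : a ≤ b) :
    ‖∑ n ∈ Ico a b, c n * (u n - u (n + 1))‖ ≤
      ‖c a‖ + ‖c b‖ + ∑ n ∈ Ico a b, ‖c (n + 1) - c n‖ := by
  have hmul (z : R) (n : ℕ) : ‖z * u n‖ ≤ ‖z‖ :=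
    (norm_mul_le _ _).trans (mul_le_of_le_one_right (norm_nonneg _) (hu n))
  have hparts : ∑ n ∈ Ico a b, c n * (u n - u (n + 1)) =
      c a * u a - c b * u b + ∑ n ∈ Ico a b, (c (n + 1) - c n) * u (n + 1) := by
    rw [← neg_sub (c b * u b), ← sum_Ico_sub (fun n ↦ c n * u n) hab, ← sum_neg_distrib,
      ← sum_add_distrib]
    exact sum_congr rfl fun n _ ↦ by
      simp only [mul_sub, sub_mul]
      abel
  rw [hparts]
  calc ‖c a * u a - c b * u b + ∑ n ∈ Ico a b, (c (n + 1) - c n) * u (n + 1)‖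
      ≤ ‖c a * u a‖ + ‖c b * u b‖ + ∑ n ∈ Ico a b, ‖(c (n + 1) - c n) * u (n + 1)‖ :=
        (norm_add_le _ _).trans (add_le_add (norm_sub_le _ _) (norm_sum_le _ _))
    _ ≤ ‖c a‖ + ‖c b‖ + ∑ n ∈ Ico a b, ‖c (n + 1) - c n‖ := by
        gcongr <;> apply hmul

theorem norm_sum_fourierChar_le_card {ι : Type*} (s : Finset ι) (f : ι → ℝ) :
    ‖∑ i ∈ s, (𝐞 (f i) : ℂ)‖ ≤ #s := by
  simpa only [Circle.norm_coe, sum_const, nsmul_eq_mul, mul_one] using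
    norm_sum_le s fun i ↦ (𝐞 (f i) : ℂ)

theorem norm_sum_fourierChar_neg {ι : Type*} (s : Finset ι) (f : ι → ℝ) :
    ‖∑ i ∈ s, (𝐞 (-f i) : ℂ)‖ = ‖∑ i ∈ s, (𝐞 (f i) : ℂ)‖ := by
  rw [← RCLike.norm_conj]
  simp [AddChar.map_neg_eq_inv]

theorem fourierChar_sub_intCast (x : ℝ) (k : ℤ) : 𝐞 (x - k) = 𝐞 x := by
  have hk : 𝐞 (k : ℝ) = 1 := by
    ext
    rw [Real.fourierChar_apply, Circle.coe_one, Complex.exp_eq_one_iff]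
    exact ⟨k, by push_cast; ring⟩
  rw [AddChar.map_sub_eq_div, hk, div_one]

theorem exists_forall_Ico_lt_and_forall_Ico_ge {d : ℕ → ℝ} (hd : Monotone d) {a b : ℕ}
    (hab : a ≤ b) (q : ℝ) :
    ∃ c, a ≤ c ∧ c ≤ b ∧ (∀ n ∈ Ico a c, d n < q) ∧ ∀ n ∈ Ico c b, q ≤ d n := by
  induction b, hab using Nat.le_induction with
  | base => exact ⟨a, le_rfl, le_rfl, by simp, by simp⟩
  | succ b hab ih =>
    rcases lt_or_ge (d b) q with hq | hq
    · refine ⟨b + 1, by lia, le_rfl, fun n hn ↦ ?_, by simp⟩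
      exact (hd (Nat.lt_succ_iff.1 (mem_Ico.1 hn).2)).trans_lt hq
    · obtain ⟨c, hac, hcb, hlt, hge⟩ := ih
      refine ⟨c, hac, by lia, hlt, fun n hn ↦ ?_⟩
      rcases Nat.lt_succ_iff_lt_or_eq.1 (mem_Ico.1 hn).2 with hnb | rfl
      · exact hge n (mem_Ico.2 ⟨(mem_Ico.1 hn).1, hnb⟩)
      · exact hq

theorem mul_sub_le_sub_of_le_fwdDiff {d : ℕ → ℝ} {δ : ℝ} (hd : ∀ n, δ ≤ Δ_[1] d n) {a b : ℕ}
    (hab : a ≤ b) : δ * (b - a) ≤ d b - d a := by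
  have hmono : Monotone fun n : ℕ ↦ d n - δ * n :=
    monotone_nat_of_le_succ fun n ↦ by
      have := hd n
      rw [fwdDiff] at this
      push_cast
      linarith
  linarith [hmono hab]

theorem monotone_of_fwdDiff_nonneg {d : ℕ → ℝ} (hd : ∀ n, 0 ≤ Δ_[1] d n) : Monotone d :=
  monotone_nat_of_le_succ fun n ↦ sub_nonneg.1 (hd n)

theorem card_Ico_le_of_le_fwdDiff {d : ℕ → ℝ} {δ p q : ℝ} (hδ : 0 < δ)
    (hd : ∀ n, δ ≤ Δ_[1] d n) (hpq : p ≤ q) {a b : ℕ} (hdpq : ∀ n ∈ Ico a b, d n ∈ Set.Icc p q) :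
    (#(Ico a b) : ℝ) ≤ (q - p) / δ + 1 := by
  rcases lt_or_ge a b with hab | hab
  · obtain ⟨m, rfl⟩ := Nat.exists_eq_add_one_of_ne_zero (Nat.ne_zero_of_lt hab)
    have ham : a ≤ m := Nat.lt_succ_iff.1 hab
    have hgap := mul_sub_le_sub_of_le_fwdDiff hd ham
    have hp := (hdpq a (mem_Ico.2 ⟨le_rfl, hab⟩)).1
    have hq := (hdpq m (mem_Ico.2 ⟨ham, m.lt_succ_self⟩)).2
    have : (m - a : ℝ) ≤ (q - p) / δ := by
      rw [le_div_iff₀ hδ]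
      linarith
    rw [Nat.card_Ico, Nat.cast_sub (by lia)]
    push_cast
    linarith
  · rw [Ico_eq_empty_of_le hab, card_empty, Nat.cast_zero]
    have := sub_nonneg.2 hpq
    positivity

/-- The **Kusmin–Landau inequality**. -/
theorem norm_sum_fourierChar_le_of_monotone_fwdDiff {f : ℕ → ℝ} {θ : ℝ} (hθ : 0 < θ)
    (hf : Monotone (Δ_[1] f)) {a b : ℕ} (hfθ : ∀ n ∈ Ico a b, Δ_[1] f n ∈ Set.Icc θ (1 - θ)) :
    ‖∑ n ∈ Ico a b, (𝐞 (f n) : ℂ)‖ ≤ 2 / θ := by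
  rcases le_or_gt b a with hab | hab
  · rw [Ico_eq_empty_of_le hab, sum_empty, norm_zero]
    positivity
  obtain ⟨m, rfl⟩ := Nat.exists_eq_add_one_of_ne_zero (Nat.ne_zero_of_lt hab)
  have ham : a ≤ m := Nat.lt_succ_iff.1 hab
  rw [Ico_add_one_right_eq_Icc] at hfθ
  have hθa := hfθ a (left_mem_Icc.2 ham)
  have hθm := hfθ m (right_mem_Icc.2 ham)
  set c : ℕ → ℂ := fun n ↦ (1 - (𝐞 (Δ_[1] f n) : ℂ))⁻¹
  have hterm (n : ℕ) (hn : n ∈ Ico a m) :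
      (𝐞 (f n) : ℂ) = c n * (𝐞 (f n) - 𝐞 (f (n + 1))) := by
    have hsin := two_mul_le_sin_pi_mul hθ.le (hfθ n (Ico_subset_Icc_self hn))
    exact fourierChar_eq_inv_one_sub_mul_sub (by rw [fwdDiff] at hsin; linarith)
  have hsum : ‖∑ n ∈ Ico a m, (𝐞 (f n) : ℂ)‖ ≤ 3 * (1 / (2 * θ)) := by
    rw [sum_congr rfl hterm]
    have habel := norm_sum_Ico_mul_sub_succ_le c (fun n ↦ (𝐞 (f n) : ℂ))
      (fun n ↦ (Circle.norm_coe _).le) ham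
    have hvar := sum_Ico_norm_inv_one_sub_fourierChar_sub_le hf hθ ham hfθ
    have hca := norm_inv_one_sub_fourierChar_le hθ hθa
    have hcm := norm_inv_one_sub_fourierChar_le hθ hθm
    linarith
  have hone : 1 ≤ 1 / (2 * θ) := by
    rw [le_div_iff₀ (by positivity)]
    linarith [hθa.1, hθa.2]
  calc ‖∑ n ∈ Ico a (m + 1), (𝐞 (f n) : ℂ)‖
      ≤ ‖∑ n ∈ Ico a m, (𝐞 (f n) : ℂ)‖ + 1 := by
        rw [sum_Ico_succ_top ham, ← Circle.norm_coe (𝐞 (f m))]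
        exact norm_add_le _ _
    _ ≤ 4 * (1 / (2 * θ)) := by linarith
    _ = 2 / θ := by ring

section SecondDifference

variable {f : ℕ → ℝ} {δ : ℝ} {a b : ℕ}

theorem norm_sum_fourierChar_le_of_fwdDiff_mem_Ico_zero_one (hδ : 0 < δ) (hδ1 : δ ≤ 1)
    (hf : ∀ n, δ ≤ Δ_[1] (Δ_[1] f) n) (hab : a ≤ b)
    (hfab : ∀ n ∈ Ico a b, Δ_[1] f n ∈ Set.Ico 0 1) :
    ‖∑ n ∈ Ico a b, (𝐞 (f n) : ℂ)‖ ≤ 7 / √δ := by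
  have hs : 0 < √δ := Real.sqrt_pos.2 hδ
  have hs1 : √δ ≤ 1 := Real.sqrt_le_one.2 hδ1
  have hmono : Monotone (Δ_[1] f) := monotone_of_fwdDiff_nonneg fun n ↦ hδ.le.trans (hf n)
  -- Distance `√δ / 2` to the integers balances the trivial bound with Kusmin–Landau.
  obtain ⟨c, hac, hcb, hlt_c, hge_c⟩ :=
    exists_forall_Ico_lt_and_forall_Ico_ge hmono hab (√δ / 2)
  obtain ⟨e, hce, heb, hlt_e, hge_e⟩ :=
    exists_forall_Ico_lt_and_forall_Ico_ge hmono hcb (1 - √δ / 2)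
  have hfirst : ‖∑ n ∈ Ico a c, (𝐞 (f n) : ℂ)‖ ≤ (√δ / 2 - 0) / δ + 1 :=
    (norm_sum_fourierChar_le_card _ f).trans <|
      card_Ico_le_of_le_fwdDiff hδ hf (by positivity) fun n hn ↦
        ⟨(hfab n (Ico_subset_Ico_right hcb hn)).1, (hlt_c n hn).le⟩
  have hmiddle : ‖∑ n ∈ Ico c e, (𝐞 (f n) : ℂ)‖ ≤ 2 / (√δ / 2) :=
    norm_sum_fourierChar_le_of_monotone_fwdDiff (by positivity) hmono fun n hn ↦
      ⟨hge_c n (Ico_subset_Ico_right heb hn), (hlt_e n hn).le⟩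
  have hlast : ‖∑ n ∈ Ico e b, (𝐞 (f n) : ℂ)‖ ≤ (1 - (1 - √δ / 2)) / δ + 1 :=
    (norm_sum_fourierChar_le_card _ f).trans <|
      card_Ico_le_of_le_fwdDiff hδ hf (by linarith) fun n hn ↦
        ⟨hge_e n hn, (hfab n (Ico_subset_Ico_left (hac.trans hce) hn)).2.le⟩
  have hone : 1 ≤ 1 / √δ := by rwa [le_div_iff₀ hs, one_mul]
  rw [← sum_Ico_consecutive _ hac hcb, ← sum_Ico_consecutive _ hce heb]
  calc ‖∑ n ∈ Ico a c, (𝐞 (f n) : ℂ) +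
        (∑ n ∈ Ico c e, (𝐞 (f n) : ℂ) + ∑ n ∈ Ico e b, (𝐞 (f n) : ℂ))‖
      ≤ (√δ / 2 - 0) / δ + 1 + (2 / (√δ / 2) + ((1 - (1 - √δ / 2)) / δ + 1)) :=
        norm_add_le_of_le hfirst (norm_add_le_of_le hmiddle hlast)
    _ = √δ / δ + 4 * (1 / √δ) + 2 := by ring
    _ = 5 * (1 / √δ) + 2 := by
        rw [Real.sqrt_div_self']
        ring
    _ ≤ 7 * (1 / √δ) := by linarith
    _ = 7 / √δ := by ring

theorem norm_sum_fourierChar_le_of_fwdDiff_mem_Ico_add_one (hδ : 0 < δ) (hδ1 : δ ≤ 1)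
    (hf : ∀ n, δ ≤ Δ_[1] (Δ_[1] f) n) (hab : a ≤ b) (k : ℤ)
    (hfab : ∀ n ∈ Ico a b, Δ_[1] f n ∈ Set.Ico (k : ℝ) (k + 1)) :
    ‖∑ n ∈ Ico a b, (𝐞 (f n) : ℂ)‖ ≤ 7 / √δ := by
  set g : ℕ → ℝ := fun n ↦ f n - (k * n : ℤ)
  have hg (n : ℕ) : Δ_[1] g n = Δ_[1] f n - k := by
    simp only [fwdDiff, g]
    push_cast
    ring
  have hgg (n : ℕ) : Δ_[1] (Δ_[1] g) n = Δ_[1] (Δ_[1] f) n := by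
    rw [fwdDiff, hg, hg, sub_sub_sub_cancel_right, ← fwdDiff]
  have key : ‖∑ n ∈ Ico a b, (𝐞 (g n) : ℂ)‖ ≤ 7 / √δ := by
    refine norm_sum_fourierChar_le_of_fwdDiff_mem_Ico_zero_one hδ hδ1
      (fun n ↦ (hf n).trans_eq (hgg n).symm) hab fun n hn ↦ ?_
    obtain ⟨hk, hk1⟩ := hfab n hn
    rw [hg]
    exact ⟨by linarith, by linarith⟩
  simpa only [g, fourierChar_sub_intCast] using key

theorem norm_sum_fourierChar_le_of_fwdDiff_mem_Ico_add_natCast (hδ : 0 < δ) (hδ1 : δ ≤ 1)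
    (hf : ∀ n, δ ≤ Δ_[1] (Δ_[1] f) n) (hab : a ≤ b) (k : ℤ) (j : ℕ)
    (hfab : ∀ n ∈ Ico a b, Δ_[1] f n ∈ Set.Ico (k : ℝ) (k + j)) :
    ‖∑ n ∈ Ico a b, (𝐞 (f n) : ℂ)‖ ≤ j * (7 / √δ) := by
  induction j generalizing b with
  | zero =>
    have hempty : Ico a b = ∅ := eq_empty_of_forall_notMem fun n hn ↦ by
      simpa using hfab n hn
    simp [hempty]
  | succ j ih =>
    have hmono : Monotone (Δ_[1] f) := monotone_of_fwdDiff_nonneg fun n ↦ hδ.le.trans (hf n)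
    obtain ⟨c, hac, hcb, hlt, hge⟩ :=
      exists_forall_Ico_lt_and_forall_Ico_ge hmono hab (k + j : ℝ)
    have hlower := ih hac fun n hn ↦ ⟨(hfab n (Ico_subset_Ico_right hcb hn)).1, hlt n hn⟩
    have hupper : ‖∑ n ∈ Ico c b, (𝐞 (f n) : ℂ)‖ ≤ 7 / √δ := by
      refine norm_sum_fourierChar_le_of_fwdDiff_mem_Ico_add_one hδ hδ1 hf hcb (k + j)
        fun n hn ↦ ?_
      have hlt' := (hfab n (Ico_subset_Ico_left hac hn)).2
      push_cast at hlt' ⊢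
      exact ⟨hge n hn, by linarith⟩
    rw [← sum_Ico_consecutive _ hac hcb]
    refine (norm_add_le_of_le hlower hupper).trans_eq ?_
    push_cast
    ring

/-- **Van der Corput's second derivative test** for sequences. -/
theorem norm_sum_fourierChar_le_of_le_fwdDiff_fwdDiff (hδ : 0 < δ)
    (hf : ∀ n, δ ≤ Δ_[1] (Δ_[1] f) n) (hab : a ≤ b) :
    ‖∑ n ∈ Ico a b, (𝐞 (f n) : ℂ)‖ ≤ (Δ_[1] f b - Δ_[1] f a + 2) * (7 / √δ) := by
  have hgap := mul_sub_le_sub_of_le_fwdDiff hf hab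
  have hmono : Monotone (Δ_[1] f) := monotone_of_fwdDiff_nonneg fun n ↦ hδ.le.trans (hf n)
  rcases le_or_gt δ 1 with hδ1 | hδ1
  · obtain ⟨j, hj⟩ := Int.le.dest (Int.floor_mono (hmono hab))
    have hjR : (⌊Δ_[1] f a⌋ : ℝ) + j = ⌊Δ_[1] f b⌋ := by exact_mod_cast hj
    refine (norm_sum_fourierChar_le_of_fwdDiff_mem_Ico_add_natCast hδ hδ1 hf hab
      ⌊Δ_[1] f a⌋ (j + 1) fun n hn ↦ ⟨?_, ?_⟩).trans ?_
    · exact (Int.floor_le _).trans (hmono (mem_Ico.1 hn).1)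
    · have := hmono (mem_Ico.1 hn).2.le
      push_cast
      linarith [Int.lt_floor_add_one (Δ_[1] f b)]
    · gcongr
      push_cast
      linarith [Int.floor_le (Δ_[1] f b), Int.lt_floor_add_one (Δ_[1] f a)]
  · have hs : 1 ≤ √δ := Real.one_le_sqrt.2 hδ1.le
    have hab' : (0 : ℝ) ≤ b - a := sub_nonneg.2 (by exact_mod_cast hab)
    calc ‖∑ n ∈ Ico a b, (𝐞 (f n) : ℂ)‖ ≤ b - a := by
          simpa [Nat.cast_sub hab] using norm_sum_fourierChar_le_card (Ico a b) f
      _ ≤ √δ * (b - a) := le_mul_of_one_le_left hab' hs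
      _ = δ * (b - a) / √δ := by rw [mul_div_right_comm, Real.div_sqrt]
      _ ≤ (Δ_[1] f b - Δ_[1] f a) / √δ := by gcongr
      _ ≤ (Δ_[1] f b - Δ_[1] f a + 2) * (7 / √δ) := by
          rw [mul_div_assoc', div_le_div_iff_of_pos_right (by positivity)]
          linarith [mul_nonneg hδ.le hab']

end SecondDifference

theorem norm_sum_fourierChar_quadratic_le {t : ℝ} (ht : 0 < t) (x : ℝ) (a b : ℤ) :
    ‖∑ ξ ∈ Icc a b, (𝐞 (x * ξ + t * (ξ : ℝ) ^ 2) : ℂ)‖ ≤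
      14 * (1 + t * #(Icc a b)) * t ^ (-(1 / 2) : ℝ) := by
  set f : ℕ → ℝ := fun n ↦ x * (a + n) + t * (a + n) ^ 2
  have hf (n : ℕ) : Δ_[1] f n = x + t * (2 * (a + n) + 1) := by
    simp only [fwdDiff, f]
    push_cast
    ring
  have hff (n : ℕ) : t ≤ Δ_[1] (Δ_[1] f) n := by
    rw [fwdDiff, hf, hf]
    push_cast
    linarith
  have hsum : ∑ ξ ∈ Icc a b, (𝐞 (x * ξ + t * (ξ : ℝ) ^ 2) : ℂ) =
      ∑ n ∈ Ico 0 #(Icc a b), (𝐞 (f n) : ℂ) := by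
    rw [Int.card_Icc, Int.Icc_eq_finset_map, sum_map, Nat.Ico_zero_eq_range]
    simp [f]
  have hrpow : t ^ (-(1 / 2) : ℝ) = 1 / √t := by
    rw [Real.rpow_neg ht.le, Real.sqrt_eq_rpow, one_div, one_div]
  rw [hsum, hrpow]
  refine (norm_sum_fourierChar_le_of_le_fwdDiff_fwdDiff ht hff (Nat.zero_le _)).trans_eq ?_
  rw [hf, hf]
  push_cast
  ring

theorem torus_dispersive_estimate_1d_general {t : ℝ} (ht : t ≠ 0) (x : ℝ) (a b : ℤ) :
    ‖∑ ξ ∈ Icc a b, Complex.exp (2 * Real.pi * I * (x * ξ + t * (ξ : ℝ) ^ 2))‖ ≤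
      14 * (1 + |t| * #(Icc a b)) * |t| ^ (-(1 / 2) : ℝ) := by
  have hexp (ξ : ℤ) : Complex.exp (2 * Real.pi * I * (x * ξ + t * (ξ : ℝ) ^ 2)) =
      𝐞 (x * ξ + t * (ξ : ℝ) ^ 2) := by
    rw [Real.fourierChar_apply]
    push_cast
    ring_nf
  simp only [hexp]
  rcases ht.lt_or_gt with ht | ht
  · rw [abs_of_neg ht, ← norm_sum_fourierChar_neg]
    simpa only [neg_mul, neg_add] using
      norm_sum_fourierChar_quadratic_le (neg_pos.2 ht) (-x) a b
  · rw [abs_of_pos ht]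
    exact norm_sum_fourierChar_quadratic_le ht x a b

theorem abs_mul_card_Icc_neg_natCast_le {N : ℕ} (hN : 1 ≤ N) {t : ℝ} (ht : |t| ≤ 1 / N) :
    |t| * #(Icc (-(N : ℤ)) N) ≤ 3 := by
  have hN' : (1 : ℝ) ≤ N := by exact_mod_cast hN
  have hcard : #(Icc (-(N : ℤ)) N) = 2 * N + 1 := by
    rw [Int.card_Icc]
    lia
  rw [le_div_iff₀ (by positivity)] at ht
  rw [hcard]
  push_cast
  nlinarith [abs_nonneg t]

end

/-- One-dimensional dispersive (Weyl sum) estimate for the periodic Schrödinger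
kernel: there is a constant `C > 0`, independent of `N`, such that for every
`N ≥ 1`, every `t` with `0 < |t| ≤ 1/N`, and every `x ∈ 𝕋 = ℝ/ℤ` (represented
by a real number, the sum being `1`-periodic in `x`),
`|∑_{ξ=-N}^{N} e^{2πi(xξ + tξ²)}| ≤ C |t|^{-1/2}`. -/
theorem torus_dispersive_estimate_1d :
    ∃ C : ℝ, 0 < C ∧ ∀ N : ℕ, 1 ≤ N → ∀ t : ℝ, t ≠ 0 → |t| ≤ 1 / N → ∀ x : ℝ,
      ‖∑ ξ ∈ Finset.Icc (-(N : ℤ)) (N : ℤ),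
          Complex.exp (2 * Real.pi * I * (x * ξ + t * (ξ : ℝ) ^ 2))‖ ≤
        C * |t| ^ (-(1 / 2) : ℝ) := by
  refine ⟨56, by norm_num, fun N hN t ht htN x ↦
    (torus_dispersive_estimate_1d_general ht x _ _).trans ?_⟩
  gcongr
  linarith [abs_mul_card_Icc_neg_natCast_le hN htN]
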